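/- Let b ≥ 2 and let B_0,…,B_{b−2} ∈ S satisfy ν(B_i) ≥ b−i for all i (that is, B_i ∈ m^{b−i}), with not all B_i zero. Then the order at the closed point of the differential closure G_X^{(d)} := Diff_S(S[B_{b−2}W^2, B_{b−3}W^3, …, B_0W^b]) equals the minimum over i (with B_i ≠ 0) of ν(B_i)/(b−i): ord(G_X^{(d)}) = min_i ν(B_i)/(b−i). -/

import Mathlib

open Polynomial
open scoped ENNReal

noncomputable section

namespace NashMult

/-- The `m`-adic order `ν(f)` of an element `f` of a ring: the largest `n` with `f ∈ m ^ n`. -/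
def adicOrder {R : Type*} [CommRing R] (m : Ideal R) (f : R) : ℕ :=
  sSup {n : ℕ | f ∈ m ^ n}

/-- A subalgebra `G ⊆ R[W]` is *graded* if it is spanned by its "monomials", i.e. it is closed
under taking homogeneous components.  This is the condition expressing that `G = ⊕ I_l W^l`
for a family of ideals `I_l` (with `I_0 = R` and `I_i · I_j ⊆ I_{i+j}` automatic). -/
def Graded {R : Type*} [CommRing R] (G : Subalgebra R (Polynomial R)) : Prop :=
  ∀ p ∈ G, ∀ n : ℕ, (C (p.coeff n) * X ^ n : Polynomial R) ∈ G

/-- A *Rees algebra* over `R`: a finitely generated graded subalgebra of `R[W]`. -/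
def IsReesAlgebra {R : Type*} [CommRing R] (G : Subalgebra R (Polynomial R)) : Prop :=
  G.FG ∧ Graded G

/-- The order of (the Rees algebra) `G` at the closed point of the local ring `(R, m)`:
`ord(G) = inf { ν(f)/n : f W^n a homogeneous element of G, n ≥ 1, f ≠ 0 }`
(with value `∞` for the empty infimum). -/
def reesOrder {R : Type*} [CommRing R] (m : Ideal R) (G : Subalgebra R (Polynomial R)) : ℝ≥0∞ :=
  sInf {q : ℝ≥0∞ | ∃ (f : R) (n : ℕ), f ≠ 0 ∧ 1 ≤ n ∧ (C f * X ^ n : Polynomial R) ∈ G ∧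
    q = (adicOrder m f : ℝ≥0∞) / (n : ℝ≥0∞)}

/-- `G = ⊕ I_l W^l` is *differentially closed* relative to a family `D` of derivations if
`I_{l+1} ⊆ I_l` and `D_j (I_l) ⊆ I_{l-1}` for all `l ≥ 1` and all `j`. -/
def DiffClosed {k R ι : Type*} [CommRing k] [CommRing R] [Algebra k R]
    (D : ι → Derivation k R R) (G : Subalgebra R (Polynomial R)) : Prop :=
  (∀ (f : R) (l : ℕ), 1 ≤ l → (C f * X ^ (l + 1) : Polynomial R) ∈ G →
      (C f * X ^ l : Polynomial R) ∈ G) ∧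
  (∀ (f : R) (l : ℕ) (j : ι), (C f * X ^ (l + 1) : Polynomial R) ∈ G →
      (C (D j f) * X ^ l : Polynomial R) ∈ G)

/-- `Diff(M)`: the smallest graded differentially closed subalgebra of `R[W]` containing the
set `M`. -/
def diffClosure {k R ι : Type*} [CommRing k] [CommRing R] [Algebra k R]
    (D : ι → Derivation k R R) (M : Set (Polynomial R)) : Subalgebra R (Polynomial R) :=
  sInf {G : Subalgebra R (Polynomial R) | M ⊆ ↑G ∧ Graded G ∧ DiffClosed D G}

/-- The image `ψ(G)` of a Rees algebra `G` over `R` under a homomorphism (arc) `ψ : R → K⟦t⟧`: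
the Rees algebra over `K⟦t⟧` generated by all `ψ(g) W^l` for `g W^l` a homogeneous element of
`G` with `ψ(g) ≠ 0`. -/
def arcImage {R A : Type*} [CommRing R] [CommRing A] (ψ : R → A)
    (G : Subalgebra R (Polynomial R)) : Subalgebra A (Polynomial A) :=
  Algebra.adjoin A {p : Polynomial A | ∃ (g : R) (l : ℕ),
    (C g * X ^ l : Polynomial R) ∈ G ∧ ψ g ≠ 0 ∧ p = C (ψ g) * X ^ l}

/-- The order `ord(ψ)` of an arc `ψ : R → K⟦t⟧`: the largest `n` such that
`ψ(m) ⊆ t^n` (`t` being the ideal `tI`). -/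
def homOrd {R A : Type*} [CommRing R] [CommRing A] (m : Ideal R) (tI : Ideal A)
    (ψ : R → A) : ℕ :=
  sSup {n : ℕ | ∀ s ∈ m, ψ s ∈ tI ^ n}

/-- The maximal ideal `(t)` of `K⟦t⟧`. -/
def tId (K : Type*) [CommRing K] : Ideal (PowerSeries K) :=
  Ideal.span {(PowerSeries.X : PowerSeries K)}

/-- The `t`-adic order on `K⟦t⟧`. -/
def tOrd {K : Type*} [CommRing K] (g : PowerSeries K) : ℕ :=
  adicOrder (tId K) g

/-- The family of ideals `I_l` of the graded algebra `G = ⊕ I_l W^l`. -/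
def idealFam {R : Type*} [CommRing R] (G : Subalgebra R (Polynomial R)) (l : ℕ) : Ideal R :=
  Submodule.comap (Polynomial.monomial l : R →ₗ[R] Polynomial R) (Subalgebra.toSubmodule G)

/-- The closed point of the local ring `(R, m)` belongs to the singular locus of
`G = ⊕ I_l W^l`, i.e. `ν(I_l) ≥ l` for all `l ≥ 1`. -/
def SingFam {R : Type*} [CommRing R] (m : Ideal R) (I : ℕ → Ideal R) : Prop :=
  ∀ l : ℕ, 1 ≤ l → I l ≤ m ^ l

/-- The transform `⊕ (I_l · T^{-l}) W^l` of a Rees algebra `⊕ I_l W^l` over a DVR with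
uniformizer `T` (when the closed point lies in the singular locus, `I_l ⊆ (T^l)` and
`I_l · T^{-l} = (I_l : (T^l))`). -/
def transformFam {R : Type*} [CommRing R] (T : R) (I : ℕ → Ideal R) : ℕ → Ideal R :=
  fun l => (I l).colon (Ideal.span {T ^ l})

/-- The persistance: the least number `κ` of transforms needed so that the closed point no
longer lies in the singular locus. -/
def persist {R : Type*} [CommRing R] (m : Ideal R) (T : R)
    (G : Subalgebra R (Polynomial R)) : ℕ :=
  sInf {κ : ℕ | ¬ SingFam m ((transformFam T)^[κ] (idealFam G))}

/-- The set of elements of a ring integral over a subset `s` (monic equation with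
coefficients in `s`). -/
def intClos {A : Type*} [CommRing A] (s : Set A) : Set A :=
  {p : A | ∃ q : Polynomial A, q.Monic ∧ (∀ n, q.coeff n ∈ s) ∧ Polynomial.eval p q = 0}


/-- The monic polynomial `f = x^b + B_{b-2} x^{b-2} + ⋯ + B_1 x + B_0` with coefficients
`B_j = Bc j` (only `j ≤ b - 2` is relevant). -/
def minPolyOf {S : Type*} [CommRing S] (b : ℕ) (Bc : ℕ → S) : Polynomial S :=
  Polynomial.X ^ b + ∑ j ∈ Finset.range (b - 1), Polynomial.C (Bc j) * Polynomial.X ^ j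


/-- The maximal ideal `(z_1, …, z_d)` of the polynomial ring `k[z_1, …, z_d]`
(the kernel of evaluation at the origin). -/
def mPoly (k : Type) [Field k] (d : ℕ) : Ideal (MvPolynomial (Fin d) k) :=
  RingHom.ker (MvPolynomial.aeval (fun _ => (0 : k)) : MvPolynomial (Fin d) k →ₐ[k] k)

instance {k : Type} [Field k] {d : ℕ} : (mPoly k d).IsMaximal :=
  RingHom.ker_isMaximal_of_surjective _ (fun a => ⟨MvPolynomial.C a, by simp⟩)

instance {k : Type} [Field k] {d : ℕ} : (mPoly k d).IsPrime :=
  (inferInstance : (mPoly k d).IsMaximal).isPrime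

/-- `IsSLoc k d S` says that `S` is (identified with) the localization of `k[z_1, …, z_d]`
at the maximal ideal `(z_1, …, z_d)`. -/
abbrev IsSLoc (k : Type) [Field k] (d : ℕ) (S : Type) [CommRing S]
    [Algebra (MvPolynomial (Fin d) k) S] : Prop :=
  IsLocalization.AtPrime S (mPoly k d)

/-- The element `z_j` of `S`. -/
def zvar (k : Type) [Field k] (d : ℕ) (S : Type) [CommRing S]
    [Algebra (MvPolynomial (Fin d) k) S] (j : Fin d) : S :=
  algebraMap (MvPolynomial (Fin d) k) S (MvPolynomial.X j)

/-- The maximal ideal `m = (z_1, …, z_d)` of the local ring `S`. -/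
def mS (k : Type) [Field k] (d : ℕ) (S : Type) [CommRing S]
    [Algebra (MvPolynomial (Fin d) k) S] : Ideal S :=
  (mPoly k d).map (algebraMap (MvPolynomial (Fin d) k) S)


variable (k : Type) [Field k] (d : ℕ)
variable (S : Type) [CommRing S] [Algebra (MvPolynomial (Fin d) k) S] [Algebra k S]

/-- The elimination algebra `G_X^{(d)} = Diff(S[B_{b-2} W^2, …, B_0 W^b])` over `S` of the
hypersurface `X = V(f)`, where `f = x^b + B_{b-2} x^{b-2} + ⋯ + B_0`. -/
def hypElim (D : Fin d → Derivation k S S) (b : ℕ) (Bc : ℕ → S) :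
    Subalgebra S (Polynomial S) :=
  diffClosure D {p : Polynomial S | ∃ i ≤ b - 2,
    p = Polynomial.C (Bc i) * Polynomial.X ^ (b - i)}

/-- An arc in the hypersurface `X = V(f)` through the closed point `ξ`: a `k`-algebra
homomorphism `φ : S[x] → K⟦t⟧` with `φ(f) = 0` and `φ(x), φ(z_1), …, φ(z_d) ∈ (t)`,
with `φ(x)` and all `φ(z_j)` nonzero. -/
def IsHypArc (b : ℕ) (Bc : ℕ → S) {K : Type} [Field K] [Algebra k K]
    (φ : Polynomial S →ₐ[k] PowerSeries K) : Prop :=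
  φ (minPolyOf b Bc) = 0 ∧
  φ Polynomial.X ∈ tId K ∧ (∀ j, φ (Polynomial.C (zvar k d S j)) ∈ tId K) ∧
  φ Polynomial.X ≠ 0 ∧ (∀ j, φ (Polynomial.C (zvar k d S j)) ≠ 0)

/-- The order of the arc `φ`: `ord(φ) = min {α_0, α_1, …, α_d}`, where
`α_0 = ord_t φ(x)` and `α_j = ord_t φ(z_j)`. -/
def hypArcOrd {K : Type} [Field K] [Algebra k K]
    (φ : Polynomial S →ₐ[k] PowerSeries K) : ℕ :=
  sInf (insert (tOrd (φ Polynomial.X))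
    (Set.range fun j => tOrd (φ (Polynomial.C (zvar k d S j)))))

/-- The contact algebra `G^{(1)}_{X_0,φ}`: the Rees algebra over `K⟦t⟧` generated by
`t^{α_0} W` together with all `φ(g) W^l`, for `g W^l` a homogeneous element of `G_X^{(d)}`
with `φ(g) ≠ 0`. -/
def hypContact (D : Fin d → Derivation k S S) (b : ℕ) (Bc : ℕ → S)
    {K : Type} [Field K] [Algebra k K] (φ : Polynomial S →ₐ[k] PowerSeries K) :
    Subalgebra (PowerSeries K) (Polynomial (PowerSeries K)) :=
  Algebra.adjoin (PowerSeries K)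
    (insert
      (Polynomial.C ((PowerSeries.X : PowerSeries K) ^ tOrd (φ Polynomial.X)) * Polynomial.X)
      {p : Polynomial (PowerSeries K) | ∃ (g : S) (l : ℕ),
        (Polynomial.C g * Polynomial.X ^ l : Polynomial S) ∈ hypElim k d S D b Bc ∧
        φ (Polynomial.C g) ≠ 0 ∧
        p = Polynomial.C (φ (Polynomial.C g)) * Polynomial.X ^ l})


/-- Any derivation lowers the adic order by at most one. -/
lemma deriv_mem_pow {k R : Type*} [CommRing k] [CommRing R] [Algebra k R]
    (D : Derivation k R R) (m : Ideal R) (n : ℕ) :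
    ∀ f ∈ m ^ (n + 1), D f ∈ m ^ n := by
  induction n with
  | zero => intro f _; simp
  | succ n ih =>
    intro f hf
    rw [pow_succ] at hf
    induction hf using Submodule.mul_induction_on' with
    | mem_mul_mem x hx y hy =>
      rw [Derivation.leibniz, smul_eq_mul, smul_eq_mul]
      refine Ideal.add_mem _ (Ideal.mul_mem_right _ _ hx) ?_
      rw [pow_succ, mul_comm y]
      exact Ideal.mul_mem_mul (ih x hx) hy
    | add x _ y _ hx hy => rw [map_add]; exact Ideal.add_mem _ hx hy

/-- The subalgebra of polynomials whose `n`-th coefficient lies in `m ^ e n`. -/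
def ordAlg {R : Type*} [CommRing R] (m : Ideal R) (e : ℕ → ℕ) (h0 : e 0 = 0)
    (hadd : ∀ i j, e (i + j) ≤ e i + e j) : Subalgebra R (Polynomial R) where
  carrier := {p | ∀ n, p.coeff n ∈ m ^ e n}
  mul_mem' := by
    intro p q hp hq n
    rw [Polynomial.coeff_mul]
    refine Ideal.sum_mem _ fun x hx => ?_
    rw [← Finset.HasAntidiagonal.mem_antidiagonal.1 hx]
    refine Ideal.pow_le_pow_right (hadd _ _) ?_
    rw [pow_add]
    exact Ideal.mul_mem_mul (hp _) (hq _)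
  add_mem' := by
    intro p q hp hq n
    rw [Polynomial.coeff_add]
    exact Ideal.add_mem _ (hp n) (hq n)
  algebraMap_mem' := by
    intro r n
    rw [Polynomial.algebraMap_apply, Polynomial.coeff_C]
    split_ifs with h
    · subst h; simp [h0]
    · exact Ideal.zero_mem _

lemma mem_ordAlg_monomial {R : Type*} [CommRing R] (m : Ideal R) (e : ℕ → ℕ) (h0 : e 0 = 0)
    (hadd : ∀ i j, e (i + j) ≤ e i + e j) (f : R) (n : ℕ) :
    (C f * X ^ n : Polynomial R) ∈ ordAlg m e h0 hadd ↔ f ∈ m ^ e n := by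
  change (∀ l, (C f * X ^ n : Polynomial R).coeff l ∈ m ^ e l) ↔ _
  constructor
  · intro h; simpa using h n
  · intro h l
    rw [Polynomial.coeff_C_mul_X_pow]
    split_ifs with hl
    · rwa [hl]
    · exact Ideal.zero_mem _

lemma diffClosure_le_ordAlg {k R ι : Type*} [CommRing k] [CommRing R] [Algebra k R]
    (D : ι → Derivation k R R) (M : Set (Polynomial R))
    (m : Ideal R) (e : ℕ → ℕ) (h0 : e 0 = 0)
    (hadd : ∀ i j, e (i + j) ≤ e i + e j) (hs : ∀ l, e l + 1 ≤ e (l + 1))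
    (hM : M ⊆ ↑(ordAlg m e h0 hadd)) :
    diffClosure D M ≤ ordAlg m e h0 hadd := by
  refine sInf_le ⟨hM, ?_, ?_, ?_⟩
  · intro p hp n
    rw [mem_ordAlg_monomial]
    exact hp n
  · intro f l _ hf
    rw [mem_ordAlg_monomial] at hf ⊢
    exact Ideal.pow_le_pow_right (by have := hs l; omega) hf
  · intro f l j hf
    rw [mem_ordAlg_monomial] at hf ⊢
    exact deriv_mem_pow _ _ _ _ (Ideal.pow_le_pow_right (hs l) hf)

lemma natdiv_le_iff (a c v n : ℕ) (hc : 1 ≤ c) (hn : 1 ≤ n) :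
    (a : ℝ≥0∞) / (c : ℝ≥0∞) ≤ (v : ℝ≥0∞) / (n : ℝ≥0∞) ↔ a * n ≤ v * c := by
  have hc0 : (c : ℝ≥0∞) ≠ 0 := by exact_mod_cast (by omega : c ≠ 0)
  have hn0 : (n : ℝ≥0∞) ≠ 0 := by exact_mod_cast (by omega : n ≠ 0)
  rw [ENNReal.div_le_iff hc0 (ENNReal.natCast_ne_top c), ← ENNReal.mul_div_right_comm,
    ENNReal.le_div_iff_mul_le (Or.inl hn0) (Or.inl (ENNReal.natCast_ne_top n))]
  exact_mod_cast Iff.rfl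

lemma bdd_order {R : Type*} [CommRing R] [IsDomain R] [IsNoetherianRing R] (m : Ideal R)
    (hm : m ≠ ⊤) (f : R) (hf : f ≠ 0) : BddAbove {n : ℕ | f ∈ m ^ n} := by
  by_contra h
  apply hf
  have : f ∈ (⨅ i : ℕ, m ^ i) := by
    rw [Ideal.mem_iInf]
    intro i
    rw [not_bddAbove_iff] at h
    obtain ⟨n, hn, hi⟩ := h i
    exact Ideal.pow_le_pow_right hi.le hn
  rwa [Ideal.iInf_pow_eq_bot_of_isDomain m hm] at this

/-- (Lemma `lema:ord_algebra_eliminacion`.)  If `B_i ∈ m^{b-i}` for all `i`, not all zero,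
then the order at the closed point of `G_X^{(d)} = Diff_S(S[B_{b-2} W^2, …, B_0 W^b])`
equals the minimum over the `i` with `B_i ≠ 0` of `ν(B_i)/(b-i)`. -/
theorem order_of_hypersurface_elimination_algebra
    (k : Type) [Field k] [CharZero k] (d : ℕ) (hd : 1 ≤ d)
    (S : Type) [CommRing S] [IsDomain S] [Algebra (MvPolynomial (Fin d) k) S]
    [Algebra k S] [IsScalarTower k (MvPolynomial (Fin d) k) S] [IsSLoc k d S]
    (DS : Fin d → Derivation k S S)
    (hDS : ∀ i j : Fin d, DS j (zvar k d S i) = if i = j then 1 else 0)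
    (b : ℕ) (hb : 2 ≤ b) (Bc : ℕ → S)
    (hmem : ∀ i ≤ b - 2, Bc i ∈ (mS k d S) ^ (b - i))
    (hnz : ∃ i ≤ b - 2, Bc i ≠ 0) :
    IsLeast
      {q : ℝ≥0∞ | ∃ i, i ≤ b - 2 ∧ Bc i ≠ 0 ∧
        q = (adicOrder (mS k d S) (Bc i) : ℝ≥0∞) / ((b - i : ℕ) : ℝ≥0∞)}
      (reesOrder (mS k d S) (hypElim k d S DS b Bc)) := by
  have hprime : (mS k d S).IsPrime :=
    IsLocalization.isPrime_of_isPrime_disjoint (mPoly k d).primeCompl S (mPoly k d) inferInstance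
      (Set.disjoint_left.2 fun x hx hx' => hx hx')
  have hnoeth : IsNoetherianRing S :=
    IsLocalization.isNoetherianRing (mPoly k d).primeCompl S inferInstance
  set m := mS k d S with hmdef
  have hbdd : ∀ f : S, f ≠ 0 → BddAbove {n : ℕ | f ∈ m ^ n} := bdd_order m hprime.ne_top
  have hle : ∀ (f : S) (n : ℕ), f ≠ 0 → f ∈ m ^ n → n ≤ adicOrder m f :=
    fun f n hf hn => le_csSup (hbdd f hf) hn
  have hin : ∀ f : S, f ≠ 0 → f ∈ m ^ adicOrder m f :=
    fun f hf => Nat.sSup_mem ⟨0, by simp⟩ (hbdd f hf)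
  classical
  obtain ⟨i0, hi0, hmin⟩ := Finset.exists_min_image
    ((Finset.range (b - 1)).filter fun i => Bc i ≠ 0)
    (fun i => (adicOrder m (Bc i) : ℝ≥0∞) / ((b - i : ℕ) : ℝ≥0∞))
    (by
      obtain ⟨i, hi, hi'⟩ := hnz
      exact ⟨i, by simp only [Finset.mem_filter, Finset.mem_range]; exact ⟨by omega, hi'⟩⟩)
  simp only [Finset.mem_filter, Finset.mem_range] at hi0 hmin
  obtain ⟨hi0b, hi0nz⟩ := hi0
  have hmin' : ∀ i ≤ b - 2, Bc i ≠ 0 → (adicOrder m (Bc i0) : ℝ≥0∞) / ((b - i0 : ℕ) : ℝ≥0∞) ≤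
      (adicOrder m (Bc i) : ℝ≥0∞) / ((b - i : ℕ) : ℝ≥0∞) :=
    fun i hi hi' => hmin i ⟨by omega, hi'⟩
  have key : reesOrder m (hypElim k d S DS b Bc) =
      (adicOrder m (Bc i0) : ℝ≥0∞) / ((b - i0 : ℕ) : ℝ≥0∞) := by
    apply le_antisymm
    · refine sInf_le ⟨Bc i0, b - i0, hi0nz, by omega, ?_, rfl⟩
      refine Algebra.mem_sInf.2 fun G hG => hG.1 ⟨i0, by omega, rfl⟩
    · refine le_sInf ?_
      rintro q ⟨f, n, hf, hn, hfG, rfl⟩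
      have hac : b - i0 ≤ adicOrder m (Bc i0) := hle _ _ hi0nz (hmem i0 (by omega))
      have hc : 1 ≤ b - i0 := by omega
      have hcomp : ∀ i ≤ b - 2, Bc i ≠ 0 →
          adicOrder m (Bc i0) * (b - i) ≤ adicOrder m (Bc i) * (b - i0) := fun i hi hi' =>
        (natdiv_le_iff _ _ _ _ hc (by omega)).1 (hmin' i hi hi')
      rw [natdiv_le_iff _ _ _ _ hc hn]
      generalize adicOrder m (Bc i0) = a at *
      generalize b - i0 = c at *
      have hg : ∀ x N : ℕ, x ⌈/⌉ c ≤ N ↔ x ≤ N * c := fun x N => by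
        rw [ceilDiv_le_iff_le_mul (by omega), mul_comm]
      have hg' : ∀ x : ℕ, x ≤ (x ⌈/⌉ c) * c := fun x => (hg x _).1 le_rfl
      have h0 : (a * 0) ⌈/⌉ c = 0 := by
        have := (hg (a * 0) 0).2 (by simp); omega
      have hadd : ∀ i j, (a * (i + j)) ⌈/⌉ c ≤ (a * i) ⌈/⌉ c + (a * j) ⌈/⌉ c := by
        intro i j
        rw [hg]
        have h1 := hg' (a * i)
        have h2 := hg' (a * j)
        nlinarith
      have hs : ∀ l, (a * l) ⌈/⌉ c + 1 ≤ (a * (l + 1)) ⌈/⌉ c := by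
        intro l
        have h1 := hg' (a * (l + 1))
        have hpos : 1 ≤ (a * (l + 1)) ⌈/⌉ c := by
          by_contra hh
          have hz : (a * (l + 1)) ⌈/⌉ c = 0 := by omega
          rw [hz] at h1
          nlinarith
        obtain ⟨t, ht⟩ := Nat.exists_eq_add_of_le' hpos
        rw [ht] at h1 ⊢
        have : (a * l) ⌈/⌉ c ≤ t := by
          rw [hg]
          nlinarith
        omega
      have hsub := diffClosure_le_ordAlg DS {p : Polynomial S | ∃ i ≤ b - 2,
        p = Polynomial.C (Bc i) * Polynomial.X ^ (b - i)} m (fun n => (a * n) ⌈/⌉ c) h0 hadd hs (by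
          rintro p ⟨i, hi, rfl⟩
          refine (mem_ordAlg_monomial _ _ _ _ _ _).2 ?_
          by_cases hz : Bc i = 0
          · rw [hz]; exact Ideal.zero_mem _
          · refine Ideal.pow_le_pow_right ?_ (hin _ hz)
            exact (hg _ _).2 (hcomp i hi hz))
      have hfm := (mem_ordAlg_monomial _ _ _ _ _ _).1 (hsub hfG)
      exact (hg _ _).1 (hle f _ hf hfm)
  rw [key]
  refine ⟨⟨i0, by omega, hi0nz, rfl⟩, ?_⟩
  rintro q ⟨i, hi, hi', rfl⟩
  exact hmin' i hi hi'

end NashMult
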